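/- Let A be a real 2×2 matrix with trace T and determinant D, and let α ∈ (0,1). Both eigenvalues λ of A (as complex numbers) satisfy |arg λ| > απ/2 if and only if D > 0 and either T < 0, or T ≥ 0 and T/(2√D) < cos(απ/2). -/

import Mathlib

open Real

/-! The roots of `z² - T z + D` are either two reals `x, y` or a conjugate pair `w, conj w`. A
real root lies outside the sector `|arg| ≤ θ < π` exactly when it is negative. By AM-GM, a real
pair with `x y > 0` has `(x + y) / (2 √(x y))` at least `1` if both roots are positive and at most
`-1` if both are negative, so comparing this quotient with `cos θ` detects the sign. For a nonzero
conjugate pair the quotient `T / (2 √D)` is `re w / ‖w‖ = cos (arg w)`. -/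

lemma sq_sub_add_mul_add_mul_eq_zero_iff {R : Type*} [CommRing R] [NoZeroDivisors R] {a b z : R} :
    z ^ 2 - (a + b) * z + a * b = 0 ↔ z = a ∨ z = b := by
  rw [show z ^ 2 - (a + b) * z + a * b = (z - a) * (z - b) by ring, mul_eq_zero, sub_eq_zero,
    sub_eq_zero]

lemma div_lt_iff_neg_or_nonneg_and_div_lt {K : Type*} [Field K] [LinearOrder K]
    [IsStrictOrderedRing K] {t s c : K} (hs : 0 ≤ s) (hc : 0 < c) :
    t / s < c ↔ t < 0 ∨ (0 ≤ t ∧ t / s < c) := by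
  have hneg (ht : t < 0) : t / s < c := (div_nonpos_of_nonpos_of_nonneg ht.le hs).trans_lt hc
  have := lt_or_ge t 0
  tauto

lemma exists_add_mul_eq_or_exists_re_norm_sq_eq (T D : ℝ) :
    (∃ x y : ℝ, x + y = T ∧ x * y = D) ∨ ∃ z : ℂ, 2 * z.re = T ∧ ‖z‖ ^ 2 = D := by
  rcases le_total (4 * D) (T ^ 2) with hdisc | hdisc
  · have hs : √(T ^ 2 - 4 * D) ^ 2 = T ^ 2 - 4 * D := sq_sqrt (sub_nonneg.mpr hdisc)
    exact .inl ⟨(T + √(T ^ 2 - 4 * D)) / 2, (T - √(T ^ 2 - 4 * D)) / 2, by ring, by linarith⟩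
  · have hs : √(4 * D - T ^ 2) ^ 2 = 4 * D - T ^ 2 := sq_sqrt (sub_nonneg.mpr hdisc)
    refine .inr ⟨⟨T / 2, √(4 * D - T ^ 2) / 2⟩, by ring, ?_⟩
    rw [Complex.sq_norm, Complex.normSq_mk]
    linarith

lemma lt_abs_arg_iff_re_div_norm_lt_cos {z : ℂ} {θ : ℝ} (hθ : θ ∈ Set.Icc 0 π) :
    θ < |z.arg| ↔ z ≠ 0 ∧ z.re / ‖z‖ < cos θ := by
  rcases eq_or_ne z 0 with rfl | hz
  · simp [hθ.1]
  · rw [← strictAntiOn_cos.lt_iff_gt ⟨abs_nonneg _, Complex.abs_arg_le_pi z⟩ hθ, cos_abs,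
      Complex.cos_arg hz]
    simp [hz]

lemma lt_abs_arg_ofReal_iff {x θ : ℝ} (hθ : θ ∈ Set.Ico 0 π) :
    θ < |(x : ℂ).arg| ↔ x < 0 := by
  rcases lt_or_ge x 0 with hx | hx
  · simp [Complex.arg_ofReal_of_neg hx, abs_of_pos pi_pos, hθ.2, hx]
  · simp [Complex.arg_ofReal_of_nonneg hx, hθ.1.not_gt, hx.not_gt]

lemma two_mul_sqrt_mul_le_abs_add (x y : ℝ) : 2 * √(x * y) ≤ |x + y| := by
  rw [← le_div_iff₀' two_pos, sqrt_le_iff, div_pow, sq_abs]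
  exact ⟨by positivity, by linarith [four_mul_le_sq_add x y]⟩

lemma neg_and_neg_iff_mul_pos_and_div_sqrt_lt {x y c : ℝ} (hc : c ∈ Set.Ioc (-1) 1) :
    x < 0 ∧ y < 0 ↔ 0 < x * y ∧ (x + y) / (2 * √(x * y)) < c := by
  have amgm := two_mul_sqrt_mul_le_abs_add x y
  constructor
  · rintro ⟨hx, hy⟩
    have hxy : 0 < x * y := mul_pos_of_neg_of_neg hx hy
    rw [abs_of_neg (add_neg hx hy)] at amgm
    have : (x + y) / (2 * √(x * y)) ≤ -1 := by
      rw [div_le_iff₀ (by positivity)]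
      linarith
    exact ⟨hxy, this.trans_lt hc.1⟩
  · rintro ⟨hxy, hlt⟩
    refine (mul_pos_iff.mp hxy).resolve_left fun ⟨hx, hy⟩ ↦ ?_
    rw [abs_of_pos (add_pos hx hy)] at amgm
    have : 1 ≤ (x + y) / (2 * √(x * y)) := (one_le_div (by positivity)).mpr amgm
    exact (this.trans_lt hlt).not_ge hc.2

lemma forall_root_lt_abs_arg_iff_of_real {x y θ : ℝ} (hθ : θ ∈ Set.Ico 0 π) :
    (∀ z : ℂ, z ^ 2 - (x + y) * z + x * y = 0 → θ < |z.arg|) ↔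
      0 < x * y ∧ (x + y) / (2 * √(x * y)) < cos θ := by
  have hcos : cos θ ∈ Set.Ioc (-1) 1 :=
    ⟨cos_pi ▸ cos_lt_cos_of_nonneg_of_le_pi hθ.1 le_rfl hθ.2, cos_le_one θ⟩
  simp only [sq_sub_add_mul_add_mul_eq_zero_iff, forall_eq_or_imp, forall_eq,
    lt_abs_arg_ofReal_iff hθ, neg_and_neg_iff_mul_pos_and_div_sqrt_lt hcos]

lemma forall_root_lt_abs_arg_iff_of_conj {w : ℂ} {θ : ℝ} (hθ : θ ∈ Set.Icc 0 π) :
    (∀ z : ℂ, z ^ 2 - (2 * w.re : ℝ) * z + (‖w‖ ^ 2 : ℝ) = 0 → θ < |z.arg|) ↔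
      0 < ‖w‖ ^ 2 ∧ 2 * w.re / (2 * √(‖w‖ ^ 2)) < cos θ := by
  rw [← Complex.add_conj, Complex.ofReal_pow, ← Complex.mul_conj']
  simp only [sq_sub_add_mul_add_mul_eq_zero_iff, forall_eq_or_imp, forall_eq,
    lt_abs_arg_iff_re_div_norm_lt_cos hθ, map_ne_zero, Complex.conj_re, Complex.norm_conj,
    and_self]
  rw [sqrt_sq (norm_nonneg w), mul_div_mul_left _ _ two_ne_zero, sq_pos_iff, norm_ne_zero_iff]

theorem eigenvalues_arg_criterion_general {T D θ : ℝ} (hθ : θ ∈ Set.Ico 0 π) :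
    (∀ lam : ℂ, lam ^ 2 - T * lam + D = 0 → θ < |lam.arg|) ↔
      0 < D ∧ T / (2 * √D) < cos θ := by
  obtain ⟨x, y, rfl, rfl⟩ | ⟨w, rfl, rfl⟩ := exists_add_mul_eq_or_exists_re_norm_sq_eq T D
  · exact_mod_cast forall_root_lt_abs_arg_iff_of_real hθ
  · exact forall_root_lt_abs_arg_iff_of_conj (Set.Ico_subset_Icc_self hθ)

theorem eigenvalues_arg_criterion (A : Matrix (Fin 2) (Fin 2) ℝ) (α : ℝ)
    (hα : α ∈ Set.Ioo (0:ℝ) 1) :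
    (∀ lam : ℂ, lam ^ 2 - (A.trace : ℂ) * lam + (A.det : ℂ) = 0 →
        α * π / 2 < |Complex.arg lam|) ↔
      (0 < A.det ∧ (A.trace < 0 ∨
        (0 ≤ A.trace ∧ A.trace / (2 * Real.sqrt A.det) < Real.cos (α * π / 2)))) := by
  have hθ : α * π / 2 ∈ Set.Ioo 0 (π / 2) :=
    ⟨by linarith [mul_pos hα.1 pi_pos], by linarith [mul_lt_of_lt_one_left pi_pos hα.2]⟩
  have hcos : 0 < cos (α * π / 2) := cos_pos_of_mem_Ioo ⟨by linarith [hθ.1, hθ.2], hθ.2⟩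
  exact (eigenvalues_arg_criterion_general ⟨hθ.1.le, by linarith [hθ.1, hθ.2]⟩).trans <|
    and_congr_right' <| div_lt_iff_neg_or_nonneg_and_div_lt (by positivity) hcos
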